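/- Let 0 < ε < 1. For every bound M there exists an odd integer Δ > M of the form Δ = q³(q^{d−2} − 1)/(q − 1), where q is an odd prime power and d ≥ 3/ε is an odd integer, together with a finite simple graph Γ which is arc-transitive, regular of degree Δ, has diameter at most 2, and whose number of vertices exceeds Δ^{2−ε} + 2Δ^{1−ε/3} + Δ^{1−2ε/3} + 3 (real powers). -/

import Mathlib

open Real

/-- A graph is arc-transitive if its automorphism group acts transitively on the set of
arcs (ordered pairs of adjacent vertices). -/
def SimpleGraph.IsArcTransitive {V : Type*} (G : SimpleGraph V) : Prop :=
  ∀ u v x y : V, G.Adj u v → G.Adj x y → ∃ φ : G ≃g G, φ u = x ∧ φ v = y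


namespace FlagGraph

open Submodule

variable {K W : Type} [Field K] [AddCommGroup W] [Module K W]

/-- Linear independence of two vectors, spelled out. -/
def I2 (K : Type) {W : Type} [Field K] [AddCommGroup W] [Module K W] (a b : W) : Prop :=
  ∀ s t : K, s • a + t • b = 0 → s = 0 ∧ t = 0

/-- Linear independence of three vectors, spelled out. -/
def I3 (K : Type) {W : Type} [Field K] [AddCommGroup W] [Module K W] (a b c : W) : Prop :=
  ∀ s t u : K, s • a + t • b + u • c = 0 → s = 0 ∧ t = 0 ∧ u = 0

theorem I3.swap {a b c : W} (h : I3 K a b c) : I3 K c b a := by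
  intro s t u e
  obtain ⟨h1, h2, h3⟩ := h u t s (by rw [← e]; module)
  exact ⟨h3, h2, h1⟩

theorem I3.left {a b c : W} (h : I3 K a b c) : I2 K a b := by
  intro s t e
  obtain ⟨h1, h2, h3⟩ := h s t 0 (by rw [← e]; module)
  exact ⟨h1, h2⟩

theorem I3.notMem {a b c : W} (h : I3 K a b c) : c ∉ span K {a, b} := by
  intro hc
  obtain ⟨s, t, e⟩ := mem_span_pair.1 hc
  obtain ⟨h1, h2, h3⟩ := h s t (-1) (by rw [← e]; module)
  simp at h3

theorem I2.extend {a b c : W} (h : I2 K a b) (hc : c ∉ span K {a, b}) : I3 K a b c := by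
  intro s t u e
  by_cases hu : u = 0
  · subst hu
    obtain ⟨h1, h2⟩ := h s t (by rw [← e]; module)
    exact ⟨h1, h2, rfl⟩
  · exfalso
    apply hc
    rw [mem_span_pair]
    refine ⟨-(u⁻¹ * s), -(u⁻¹ * t), ?_⟩
    have : c = u⁻¹ • (u • c) := by rw [smul_smul, inv_mul_cancel₀ hu, one_smul]
    rw [this]
    linear_combination (norm := module) (-u⁻¹) • e

theorem I2.linInd {a b : W} (h : I2 K a b) : LinearIndependent K ![a, b] :=
  LinearIndependent.pair_iff.2 h

theorem I3.linInd {a b c : W} (h : I3 K a b c) : LinearIndependent K ![a, b, c] := by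
  rw [Fintype.linearIndependent_iff]
  intro g hg
  obtain ⟨h1, h2, h3⟩ := h (g 0) (g 1) (g 2) (by simpa [Fin.sum_univ_three] using hg)
  intro i
  fin_cases i <;> assumption

theorem I2.notMem {a b : W} (h : I2 K a b) : b ∉ span K {a} := by
  intro hc
  obtain ⟨s, e⟩ := mem_span_singleton.1 hc
  obtain ⟨h1, h2⟩ := h s (-1) (by rw [← e]; module)
  simp at h2

/-- Replace the second generator of a plane. -/
theorem I2.replace {a b A : W} (h : I2 K a b) (hA : A ∈ span K {a, b}) (hA' : A ∉ span K {a}) :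
    I2 K a A ∧ span K {a, A} = span K {a, b} := by
  obtain ⟨s, t, rfl⟩ := mem_span_pair.1 hA
  have ht : t ≠ 0 := by
    rintro rfl
    exact hA' (mem_span_singleton.2 ⟨s, by module⟩)
  refine ⟨?_, le_antisymm ?_ ?_⟩
  · intro x y e
    obtain ⟨h1, h2⟩ := h (x + y * s) (y * t) (by rw [← e]; module)
    have hy : y = 0 := by simpa [ht] using h2
    subst hy
    exact ⟨by simpa using h1, rfl⟩
  · rw [span_le, Set.pair_subset_iff]
    exact ⟨mem_span_pair.2 ⟨1, 0, by module⟩, hA⟩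
  · rw [span_le, Set.pair_subset_iff]
    refine ⟨mem_span_pair.2 ⟨1, 0, by module⟩, mem_span_pair.2 ⟨-(t⁻¹ * s), t⁻¹, ?_⟩⟩
    have : b = t⁻¹ • (t • b) := by rw [smul_smul, inv_mul_cancel₀ ht, one_smul]
    nth_rw 2 [this]
    module

theorem span_pair_eq {a b c d : W} (h1 : a ∈ span K {c, d}) (h2 : b ∈ span K {c, d})
    (h3 : c ∈ span K {a, b}) (h4 : d ∈ span K {a, b}) : span K {a, b} = span K {c, d} := by
  apply le_antisymm <;> rw [span_le, Set.pair_subset_iff] <;> constructor <;> assumption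

theorem finrank_I2 {a b : W} (h : I2 K a b) : Module.finrank K (span K {a, b}) = 2 := by
  have := finrank_span_eq_card h.linInd
  have e : Set.range ![a, b] = {a, b} := by simp [Set.pair_comm]
  rw [e] at this
  simpa using this

theorem exists_notMem {L S T : Submodule K W} (hS : ¬ L ≤ S) (hT : ¬ L ≤ T) :
    ∃ x ∈ L, x ∉ S ∧ x ∉ T := by
  obtain ⟨x, hx, hxS⟩ := SetLike.not_le_iff_exists.1 hS
  obtain ⟨y, hy, hyT⟩ := SetLike.not_le_iff_exists.1 hT
  by_cases hxT : x ∈ T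
  · by_cases hyS : y ∈ S
    · refine ⟨x + y, L.add_mem hx hy, ?_, ?_⟩
      · rwa [S.add_mem_iff_left hyS]
      · rwa [T.add_mem_iff_right hxT]
    · exact ⟨y, hy, hyS, hyT⟩
  · exact ⟨x, hx, hxS, hxT⟩

/-- Transitivity of the general linear group on independent triples. -/
theorem exists_equiv {a b c a' b' c' : W} (h : I3 K a b c) (h' : I3 K a' b' c') :
    ∃ g : W ≃ₗ[K] W, g a = a' ∧ g b = b' ∧ g c = c' := by
  have qD (i : Fin 3) : (h.linInd.linearCombinationEquiv (Finsupp.single i 1) : W)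
    = ![a, b, c] i := by simp
  have qE (i : Fin 3) : (h'.linInd.linearCombinationEquiv (Finsupp.single i 1) : W)
    = ![a', b', c'] i := by simp
  let f := h.linInd.linearCombinationEquiv.symm ≪≫ₗ h'.linInd.linearCombinationEquiv
  have : FiniteDimensional K (Submodule.span K (Set.range ![a, b, c])) :=
    FiniteDimensional.span_of_finite K (Set.finite_range _)
  obtain ⟨g, hg⟩ := Submodule.exists_linearEquiv_restrict_eq f
  have key (i : Fin 3) : g (![a, b, c] i) = ![a', b', c'] i := by
    rw [← qD i, ← hg, ← qE i]
    simp [f]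
  exact ⟨g, key 0, key 1, key 2⟩

/-- Point-line flags. -/
def Flag (K W : Type) [Field K] [AddCommGroup W] [Module K W] : Type :=
  {p : Submodule K W × Submodule K W // ∃ a b, I2 K a b ∧ p = (span K {a}, span K {a, b})}

/-- The flag of an independent pair. -/
def mk (a b : W) (h : I2 K a b) : Flag K W := ⟨(span K {a}, span K {a, b}), a, b, h, rfl⟩

/-- The flag graph. -/
def graph (K W : Type) [Field K] [AddCommGroup W] [Module K W] : SimpleGraph (Flag K W) where
  Adj u v := ∃ a b c, I3 K a b c ∧ u.1 = (span K {a}, span K {a, b}) ∧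
    v.1 = (span K {c}, span K {c, b})
  symm := ⟨by
    rintro u v ⟨a, b, c, h, h1, h2⟩
    exact ⟨c, b, a, h.swap, h2, h1⟩⟩
  loopless := ⟨by
    rintro u ⟨a, b, c, h, h1, h2⟩
    rw [h1] at h2
    have e : span K {a} = span K {c} := congrArg Prod.fst h2
    apply h.notMem
    have : c ∈ span K {a} := by rw [e]; exact mem_span_singleton_self c
    exact span_mono (by simp) this⟩

theorem map_ex (f : W ≃ₗ[K] W) (p : Submodule K W × Submodule K W)
    (h : ∃ a b, I2 K a b ∧ p = (span K {a}, span K {a, b})) :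
    ∃ a b, I2 K a b ∧ (p.1.map f.toLinearMap, p.2.map f.toLinearMap)
      = (span K {a}, span K {a, b}) := by
  obtain ⟨a, b, h, rfl⟩ := h
  refine ⟨f a, f b, ?_, ?_⟩
  · intro s t e
    apply h s t
    apply f.injective
    simpa using e
  · simp [map_span, Set.image_pair]

/-- Action of a linear automorphism on flags. -/
def act (f : W ≃ₗ[K] W) (u : Flag K W) : Flag K W :=
  ⟨(u.1.1.map f.toLinearMap, u.1.2.map f.toLinearMap), map_ex f u.1 u.2⟩

theorem act_symm (f : W ≃ₗ[K] W) (u : Flag K W) : act f.symm (act f u) = u := by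
  apply Subtype.ext
  apply Prod.ext <;> simp [act, ← Submodule.map_comp]

theorem act_adj (f : W ≃ₗ[K] W) {u v : Flag K W} (h : (graph K W).Adj u v) :
    (graph K W).Adj (act f u) (act f v) := by
  obtain ⟨a, b, c, h, h1, h2⟩ := h
  refine ⟨f a, f b, f c, ?_, ?_, ?_⟩
  · intro s t r e
    apply h s t r
    apply f.injective
    simpa using e
  · simp [act, h1, map_span, Set.image_pair]
  · simp [act, h2, map_span, Set.image_pair]

theorem arcTransitive : (graph K W).IsArcTransitive := by
  rintro u v x y ⟨a, b, c, h, h1, h2⟩ ⟨a', b', c', h', h1', h2'⟩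
  obtain ⟨f, rfl, rfl, rfl⟩ := exists_equiv h h'
  refine ⟨⟨⟨act f, act f.symm, act_symm f, fun u => act_symm f.symm u⟩, ?_⟩, ?_, ?_⟩
  · intro p q
    refine ⟨fun hh => ?_, act_adj f⟩
    have := act_adj f.symm hh
    simpa [act_symm] using this
  · apply Subtype.ext
    change _ = x.1
    rw [h1']
    simp [act, h1, map_span, Set.image_pair]
  · apply Subtype.ext
    change _ = y.1
    rw [h2']
    simp [act, h2, map_span, Set.image_pair]

theorem adj_of {u w : Flag K W} {A c : W} (hA : A ∈ u.1.2) (hA' : A ∉ u.1.1) (hc : c ∉ u.1.2)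
    (hw : w.1 = (span K {c}, span K {c, A})) : (graph K W).Adj u w := by
  obtain ⟨⟨P, L⟩, a, b, h, e⟩ := u
  obtain ⟨rfl, rfl⟩ := Prod.mk.inj e
  dsimp only at hA hA' hc
  obtain ⟨h1, h2⟩ := h.replace hA hA'
  rw [← h2] at hc
  refine ⟨a, A, c, h1.extend hc, ?_, hw⟩
  simp [h2]

theorem two_step (h3 : 2 < Module.finrank K W) [FiniteDimensional K W] (u v : Flag K W) :
    ∃ w, (graph K W).Adj u w ∧ (graph K W).Adj w v := by
  suffices ∃ w, (graph K W).Adj u w ∧ (graph K W).Adj v w by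
    obtain ⟨w, h1, h2⟩ := this
    exact ⟨w, h1, h2.symm⟩
  have facts : ∀ u : Flag K W, Module.finrank K u.1.2 = 2 ∧ ¬ u.1.2 ≤ u.1.1 := by
    rintro ⟨_, a, b, h, rfl⟩
    exact ⟨finrank_I2 h, fun hh => h.notMem (hh (mem_span_pair.2 ⟨0, 1, by module⟩))⟩
  obtain ⟨du, pu⟩ := facts u
  obtain ⟨dv, pv⟩ := facts v
  by_cases huv : u.1.2 = v.1.2
  · obtain ⟨A, hA, hAu, hAv⟩ := exists_notMem pu (huv ▸ pv)
    have hne : u.1.2 ≠ ⊤ := by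
      intro e
      rw [e, finrank_top] at du
      omega
    obtain ⟨c, -, hc⟩ := SetLike.exists_of_lt (lt_top_iff_ne_top.2 hne)
    have hI : I2 K c A := by
      intro s t e
      have hs : s = 0 := by
        by_contra hs
        apply hc
        have : s • c ∈ u.1.2 := by
          rw [eq_neg_of_add_eq_zero_left e]
          exact neg_mem (smul_mem _ _ hA)
        exact (smul_mem_iff _ hs).1 this
      subst hs
      refine ⟨rfl, ?_⟩
      by_contra ht
      have hz : t • A = 0 := by simpa using e
      have : A = 0 := by simpa [ht] using hz
      exact hAu (this ▸ zero_mem _)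
    exact ⟨mk c A hI, adj_of hA hAu hc rfl, adj_of (huv ▸ hA) hAv (huv ▸ hc) rfl⟩
  · have n1 : ¬ u.1.2 ≤ v.1.2 := fun hh => huv (eq_of_le_of_finrank_eq hh (du.trans dv.symm))
    have n2 : ¬ v.1.2 ≤ u.1.2 := fun hh => huv (eq_of_le_of_finrank_eq hh (dv.trans du.symm)).symm
    obtain ⟨A, hA, hAu, hAv⟩ := exists_notMem pu n1
    obtain ⟨B, hB, hBv, hBu⟩ := exists_notMem pv n2
    have hI : I2 K (A + B) A := by
      intro s t e
      have hs : s = 0 := by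
        by_contra hs
        apply hBu
        have : s • B ∈ u.1.2 := by
          have : s • B = (-(s + t)) • A := by linear_combination (norm := module) e
          rw [this]
          exact smul_mem _ _ hA
        exact (smul_mem_iff _ hs).1 this
      subst hs
      refine ⟨rfl, ?_⟩
      by_contra ht
      have hz : t • A = 0 := by simpa using e
      have : A = 0 := by simpa [ht] using hz
      exact hAu (this ▸ zero_mem _)
    refine ⟨mk (A + B) A hI, adj_of hA hAu ?_ rfl, adj_of (c := A + B) hB hBv ?_ ?_⟩
    · rwa [Submodule.add_mem_iff_right _ hA]
    · rwa [Submodule.add_mem_iff_left _ hB]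
    · refine Prod.ext rfl (span_pair_eq ?_ ?_ ?_ ?_)
      · exact mem_span_pair.2 ⟨1, 0, by module⟩
      · exact mem_span_pair.2 ⟨1, -1, by module⟩
      · exact mem_span_pair.2 ⟨1, 0, by module⟩
      · exact mem_span_pair.2 ⟨1, -1, by module⟩

/-- Parametrisation of the neighbours of a flag. -/
theorem pair_I2 {a b c : W} (h : I2 K a b) (hc : c ∉ span K {a, b}) (t : K) :
    I2 K c (b + t • a) := by
  intro x y e
  obtain ⟨h1, h2, h3⟩ := h.extend hc (y * t) y x (by rw [← e]; module)
  exact ⟨h3, h2⟩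

theorem degree [Finite K] [Finite W] (u : Flag K W) :
    ((graph K W).neighborSet u).ncard * (Nat.card K - 1)
      = Nat.card K * (Nat.card W - Nat.card K ^ 2) := by
  classical
  obtain ⟨_, a, b, h, rfl⟩ := u
  set u : Flag K W := ⟨(span K {a}, span K {a, b}), a, b, h, rfl⟩ with hu
  have hadj : ∀ p : K × {c : W // c ∉ span K {a, b}},
      (graph K W).Adj u (mk p.2.1 (b + p.1 • a) (pair_I2 h p.2.2 p.1)) := by
    rintro ⟨t, c, hc⟩
    refine adj_of (A := b + t • a) (c := c) ?_ ?_ hc rfl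
    · exact mem_span_pair.2 ⟨t, 1, by module⟩
    · intro hh
      obtain ⟨s, e⟩ := mem_span_singleton.1 hh
      obtain ⟨-, h2⟩ := h (s - t) (-1) (by
        have : (s - t) • a + (-1 : K) • b = s • a - (b + t • a) := by module
        rw [this, e, sub_self])
      simp at h2
  let F : K × {c : W // c ∉ span K {a, b}} → (graph K W).neighborSet u :=
    fun p => ⟨_, hadj p⟩
  have hFeq : ∀ (t t' : K) (c c' : {c : W // c ∉ span K {a, b}}),
      F (t, c) = F (t', c') ↔ t' = t ∧ ∃ r : Kˣ, (r : K) • c.1 = c'.1 := by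
    rintro t t' ⟨c, hc⟩ ⟨c', hc'⟩
    constructor
    · intro e
      have e0 := congrArg (fun z => z.1.1) e
      obtain ⟨e1, e2⟩ := Prod.mk.inj e0
      dsimp only at e1 e2
      have m1 : c' ∈ span K {c} := by rw [e1]; exact mem_span_singleton_self c'
      obtain ⟨r, hr⟩ := mem_span_singleton.1 m1
      have hr0 : r ≠ 0 := by
        rintro rfl
        apply hc'
        rw [← hr, zero_smul]
        exact zero_mem _
      have m2 : b + t' • a ∈ span K {c, b + t • a} := by
        rw [e2]
        exact mem_span_pair.2 ⟨0, 1, by module⟩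
      obtain ⟨x, y, hxy⟩ := mem_span_pair.1 m2
      obtain ⟨k1, k2, k3⟩ := h.extend hc (y * t - t') (y - 1) x (by
        have : (y * t - t') • a + (y - 1) • b + x • c
          = (x • c + y • (b + t • a)) - (b + t' • a) := by module
        rw [this, hxy, sub_self])
      have hy : y = 1 := sub_eq_zero.1 k2
      subst hy
      exact ⟨by linear_combination -k1, Units.mk0 r hr0, hr⟩
    · rintro ⟨rfl, r, hr⟩
      dsimp only at hr
      subst hr
      apply Subtype.ext
      apply Subtype.ext
      have hc2 : c = (r⁻¹ : K) • ((r : K) • c) := by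
        rw [smul_smul, inv_mul_cancel₀ r.ne_zero, one_smul]
      refine Prod.ext ?_ ?_
      · change span K {c} = span K {(r : K) • c}
        exact (span_singleton_smul_eq r.isUnit c).symm
      · refine span_pair_eq ?_ ?_ ?_ ?_
        · refine mem_span_pair.2 ⟨(r⁻¹ : K), 0, ?_⟩
          rw [zero_smul, add_zero]
          exact hc2.symm
        · exact mem_span_pair.2 ⟨0, 1, by module⟩
        · exact mem_span_pair.2 ⟨r, 0, by module⟩
        · exact mem_span_pair.2 ⟨0, 1, by module⟩
  have hFsurj : Function.Surjective F := by
    rintro ⟨w, a1, b1, c, hI, e1, e2⟩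
    obtain ⟨e3, e4⟩ := Prod.mk.inj e1
    have hc : c ∉ span K {a, b} := by rw [e4]; exact hI.notMem
    have hb1 : b1 ∈ span K {a, b} := by
      rw [e4]
      exact mem_span_pair.2 ⟨0, 1, by module⟩
    obtain ⟨s, t, hst⟩ := mem_span_pair.1 hb1
    have ht : t ≠ 0 := by
      rintro rfl
      apply hI.left.notMem
      rw [← e3]
      exact mem_span_singleton.2 ⟨s, by rw [← hst]; module⟩
    refine ⟨(t⁻¹ * s, ⟨c, hc⟩), ?_⟩
    apply Subtype.ext
    apply Subtype.ext
    change _ = w.1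
    rw [e2]
    have hb : b + (t⁻¹ * s) • a = t⁻¹ • b1 := by
      rw [← hst, smul_add, smul_smul t⁻¹ t, inv_mul_cancel₀ ht]
      module
    have hb' : b1 = t • (b + (t⁻¹ * s) • a) := by
      rw [hb, smul_smul, mul_inv_cancel₀ ht, one_smul]
    refine Prod.ext rfl (span_pair_eq ?_ ?_ ?_ ?_)
    · exact mem_span_pair.2 ⟨1, 0, by module⟩
    · exact mem_span_pair.2 ⟨0, t⁻¹, by rw [zero_smul, zero_add]; exact hb.symm⟩
    · exact mem_span_pair.2 ⟨1, 0, by module⟩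
    · exact mem_span_pair.2 ⟨0, t, by rw [zero_smul, zero_add]; exact hb'.symm⟩
  have hfib : ∀ y, Nat.card {p // F p = y} = Nat.card K - 1 := by
    intro y
    obtain ⟨⟨t0, c0⟩, rfl⟩ := hFsurj y
    rw [← Nat.card_units]
    symm
    have hmem : ∀ r : Kˣ, (r : K) • c0.1 ∉ span K {a, b} := by
      intro r hr
      exact c0.2 ((smul_mem_iff _ r.ne_zero).1 hr)
    refine Nat.card_congr (Equiv.ofBijective
      (fun r => ⟨(t0, ⟨(r : K) • c0.1, hmem r⟩), ((hFeq _ _ _ _).2 ⟨rfl, r, rfl⟩).symm⟩) ⟨?_, ?_⟩)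
    · intro r r' e
      have e' : (r : K) • c0.1 = (r' : K) • c0.1 := congrArg (fun z => z.1.2.1) e
      have hc0 : c0.1 ≠ 0 := fun hz => c0.2 (hz ▸ zero_mem _)
      exact Units.ext (smul_left_injective K hc0 e')
    · rintro ⟨⟨t, c⟩, e⟩
      obtain ⟨rfl, r, hr⟩ := (hFeq _ _ _ _).1 e.symm
      exact ⟨r, by apply Subtype.ext; exact Prod.ext rfl (Subtype.ext hr)⟩
  have hN : Finite ((graph K W).neighborSet u) := Finite.of_surjective F hFsurj
  have := Fintype.ofFinite ((graph K W).neighborSet u)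
  have hS : Nat.card {c : W // c ∉ span K {a, b}} = Nat.card W - Nat.card K ^ 2 := by
    have h1 : Nat.card (span K {a, b}) = Nat.card K ^ 2 := by
      rw [Module.natCard_eq_pow_finrank (K := K), finrank_I2 h]
    have h2 := Set.ncard_compl (span K {a, b} : Set W)
    rw [← Nat.card_coe_set_eq, ← Nat.card_coe_set_eq] at h2
    rw [← h1]
    exact h2
  have key := Nat.card_congr (Equiv.sigmaFiberEquiv F)
  rw [Nat.card_sigma, Nat.card_prod, hS] at key
  simp only [hfib] at key
  rw [← key, Finset.sum_const, Finset.card_univ, smul_eq_mul, ← Nat.card_eq_fintype_card,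
    Nat.card_coe_set_eq]

theorem card_lower [Finite K] (n : ℕ) :
    Nat.card K ^ (2 * n + 1) ≤ Nat.card (Flag K (K × K × (Fin n → K))) := by
  have hI : ∀ p : K × (Fin n → K) × (Fin n → K),
      I2 K ((1, p.1, p.2.1) : K × K × (Fin n → K)) (0, 1, p.2.2) := by
    rintro ⟨x, v, w⟩ s t e
    have h1 := congrArg (fun z => z.1) e
    have h2 := congrArg (fun z => z.2.1) e
    simp at h1 h2
    subst h1
    exact ⟨rfl, by simpa using h2⟩
  let F : K × (Fin n → K) × (Fin n → K) → Flag K (K × K × (Fin n → K)) :=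
    fun p => mk _ _ (hI p)
  have hF : Function.Injective F := by
    rintro ⟨x, v, w⟩ ⟨x', v', w'⟩ e
    obtain ⟨e1, e2⟩ := Prod.mk.inj (congrArg Subtype.val e)
    change span K {((1, x, v) : K × K × (Fin n → K))}
      = span K {((1, x', v') : K × K × (Fin n → K))} at e1
    change span K {((1, x, v) : K × K × (Fin n → K)), (0, 1, w)}
      = span K {((1, x', v') : K × K × (Fin n → K)), (0, 1, w')} at e2
    have m1 : ((1, x, v) : K × K × (Fin n → K)) ∈ span K {((1, x', v') : K × K × (Fin n → K))} := by
      rw [← e1]; exact mem_span_singleton_self _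
    obtain ⟨r, hr⟩ := mem_span_singleton.1 m1
    have m2 : ((0, 1, w) : K × K × (Fin n → K)) ∈
        span K {((1, x', v') : K × K × (Fin n → K)), (0, 1, w')} := by
      rw [← e2]; exact mem_span_pair.2 ⟨0, 1, by module⟩
    obtain ⟨s, t, hst⟩ := mem_span_pair.1 m2
    simp at hr hst
    obtain ⟨rfl, rfl, rfl⟩ := hr
    obtain ⟨rfl, ht, hw⟩ := hst
    simp at ht hw
    subst ht
    simp at hw
    simp [hw]
  have : Finite (Submodule K (K × K × (Fin n → K))) := inferInstance
  have : Finite (Flag K (K × K × (Fin n → K))) := by unfold Flag; infer_instance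
  have h := Nat.card_le_card_of_injective F hF
  rw [Nat.card_prod, Nat.card_prod, Nat.card_fun, Nat.card_fin] at h
  refine le_trans (le_of_eq ?_) h
  ring

theorem real_ineq (ε : ℝ) (hε0 : 0 < ε) (hε1 : ε < 1) (q n D N : ℕ) (hq : 17 ≤ q) (hn : 2 ≤ n)
    (hd : 4 ≤ ε * ((n + 2 : ℕ) : ℝ)) (hD1 : 1 ≤ D) (hD : D ≤ 2 * q ^ (n + 2))
    (hN : q ^ (2 * n + 1) ≤ N) :
    (D : ℝ) ^ (2 - ε) + 2 * (D : ℝ) ^ (1 - ε / 3) + (D : ℝ) ^ (1 - 2 * ε / 3) + 3 < (N : ℝ) := by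
  have hD1' : (1 : ℝ) ≤ D := by exact_mod_cast hD1
  have hD' : (D : ℝ) ≤ 2 * (q : ℝ) ^ (n + 2) := by exact_mod_cast hD
  have hN' : (q : ℝ) ^ (2 * n + 1) ≤ N := by exact_mod_cast hN
  have hq' : (17 : ℝ) ≤ q := by exact_mod_cast hq
  have hq0 : (0 : ℝ) ≤ q := by linarith
  have hq1 : (1 : ℝ) ≤ q := by linarith
  have b2 : (D : ℝ) ^ (1 - ε / 3) ≤ D := by
    have := Real.rpow_le_rpow_of_exponent_le hD1' (show 1 - ε / 3 ≤ 1 by linarith)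
    simpa using this
  have b3 : (D : ℝ) ^ (1 - 2 * ε / 3) ≤ D := by
    have := Real.rpow_le_rpow_of_exponent_le hD1' (show 1 - 2 * ε / 3 ≤ 1 by linarith)
    simpa using this
  have b1 : (D : ℝ) ^ (2 - ε) ≤ 4 * (q : ℝ) ^ (2 * n) := by
    calc (D : ℝ) ^ (2 - ε) ≤ (2 * (q : ℝ) ^ (n + 2)) ^ (2 - ε) :=
          Real.rpow_le_rpow (by linarith) hD' (by linarith)
      _ = 2 ^ (2 - ε) * ((q : ℝ) ^ (n + 2)) ^ (2 - ε) :=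
          Real.mul_rpow (by norm_num) (by positivity)
      _ ≤ 4 * (q : ℝ) ^ (2 * n) := by
          gcongr
          · have := Real.rpow_le_rpow_of_exponent_le (show (1 : ℝ) ≤ 2 by norm_num)
              (show 2 - ε ≤ 2 by linarith)
            refine this.trans ?_
            norm_num
          · rw [← Real.rpow_natCast, ← Real.rpow_mul hq0, ← Real.rpow_natCast (q : ℝ) (2 * n)]
            apply Real.rpow_le_rpow_of_exponent_le hq1
            push_cast at hd ⊢
            linarith
  have b4 : (q : ℝ) ^ (n + 2) ≤ (q : ℝ) ^ (2 * n) := pow_le_pow_right₀ hq1 (by omega)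
  have b5 : (1 : ℝ) ≤ (q : ℝ) ^ (2 * n) := one_le_pow₀ hq1
  have b6 : 17 * (q : ℝ) ^ (2 * n) ≤ (q : ℝ) ^ (2 * n + 1) := by
    rw [pow_succ, mul_comm]
    gcongr
  linarith

end FlagGraph

theorem arcTransitive_diameter_two_lower_bound_odd_degree
    (ε : ℝ) (hε0 : 0 < ε) (hε1 : ε < 1) (M : ℕ) :
    ∃ (Δ q d : ℕ), Odd Δ ∧ M < Δ ∧
      IsPrimePow q ∧ Odd q ∧ Odd d ∧ (3 : ℝ) / ε ≤ (d : ℝ) ∧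
      Δ = q ^ 3 * (q ^ (d - 2) - 1) / (q - 1) ∧
      ∃ (V : Type) (_ : Fintype V) (G : SimpleGraph V),
        G.IsArcTransitive ∧
        (∀ v : V, (G.neighborSet v).ncard = Δ) ∧
        G.Connected ∧ (∀ u v : V, G.dist u v ≤ 2) ∧
        (Δ : ℝ) ^ (2 - ε) + 2 * (Δ : ℝ) ^ (1 - ε / 3) + (Δ : ℝ) ^ (1 - 2 * ε / 3) + 3 <
          (Fintype.card V : ℝ) := by
  obtain ⟨k, hk⟩ := exists_nat_ge (4 / ε)
  obtain ⟨q, hqM, hp⟩ := Nat.exists_infinite_primes (M + 17)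
  have hk' : 4 ≤ ε * k := by
    rw [div_le_iff₀ hε0] at hk
    linarith
  have hk0 : 1 ≤ k := by
    rcases Nat.eq_zero_or_pos k with rfl | h
    · simp at hk'
      linarith
    · exact h
  have hqodd : Odd q := hp.odd_of_ne_two (by omega)
  set n := 2 * k + 1 with hn
  have hnodd : Odd n := ⟨k, rfl⟩
  have hgeom : (∑ i ∈ Finset.range n, q ^ i) * (q - 1) = q ^ n - 1 :=
    geom_sum_mul_of_one_le (by omega) n
  set S := ∑ i ∈ Finset.range n, q ^ i with hS
  have hSodd : Odd S := by
    rw [hS, Finset.odd_sum_iff_odd_card_odd]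
    rw [Finset.filter_true_of_mem (fun i _ => hqodd.pow)]
    simpa using hnodd
  have hSpos : 0 < S := hSodd.pos
  have hpow1 : 1 ≤ q ^ n := Nat.one_le_pow _ _ hp.pos
  have hq3 : q ≤ q ^ 3 := Nat.le_self_pow (by norm_num) q
  have : Fact q.Prime := ⟨hp⟩
  have : NeZero q := ⟨hp.ne_zero⟩
  let K := ZMod q
  let W := K × K × (Fin n → K)
  have hKcard : Nat.card K = q := Nat.card_zmod q
  have hWcard : Nat.card W = q ^ (n + 2) := by
    simp only [W, Nat.card_prod, Nat.card_fun, Nat.card_fin, hKcard]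
    ring
  have hrank : 2 < Module.finrank K W := by
    have : Module.finrank K W = 1 + (1 + n) := by
      simp [W, Module.finrank_prod]
    omega
  have : Finite (FlagGraph.Flag K W) := by unfold FlagGraph.Flag; infer_instance
  have hcardV := FlagGraph.card_lower (K := K) n
  rw [hKcard] at hcardV
  have hwalk := FlagGraph.two_step (K := K) (W := W) hrank
  have hdist : ∀ u v, ∃ p : (FlagGraph.graph K W).Walk u v, p.length = 2 := by
    intro u v
    obtain ⟨w, h1, h2⟩ := hwalk u v
    exact ⟨.cons h1 (.cons h2 .nil), rfl⟩
  have hfin : Fintype (FlagGraph.Flag K W) := Fintype.ofFinite _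
  have hVpos : 0 < Nat.card (FlagGraph.Flag K W) := lt_of_lt_of_le (pow_pos hp.pos _) hcardV
  refine ⟨q ^ 3 * S, q, n + 2, (hqodd.pow).mul hSodd, ?_, hp.isPrimePow, hqodd, ?_, ?_, ?_,
    FlagGraph.Flag K W, hfin, FlagGraph.graph K W, FlagGraph.arcTransitive, ?_, ?_, ?_, ?_⟩
  · nlinarith
  · exact hnodd.add_even (by decide)
  · rw [div_le_iff₀ hε0, hn]
    push_cast
    nlinarith
  · rw [Nat.add_sub_cancel, ← hgeom, ← mul_assoc, Nat.mul_div_cancel _ (by omega)]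
  · intro v
    have h := FlagGraph.degree v
    rw [hKcard, hWcard] at h
    have e : q * (q ^ (n + 2) - q ^ 2) = q ^ 3 * S * (q - 1) := by
      rw [mul_assoc, hgeom, Nat.mul_sub, Nat.mul_sub]
      congr 1 <;> ring
    rw [e] at h
    exact Nat.eq_of_mul_eq_mul_right (by omega) h
  · rw [SimpleGraph.connected_iff]
    refine ⟨fun u v => ?_, ?_⟩
    · obtain ⟨p, -⟩ := hdist u v
      exact ⟨p⟩
    · exact (Nat.card_pos_iff.1 hVpos).1
  · intro u v
    obtain ⟨p, hp⟩ := hdist u v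
    exact hp ▸ SimpleGraph.dist_le p
  · rw [← Nat.card_eq_fintype_card]
    refine FlagGraph.real_ineq ε hε0 hε1 q n _ _ (by omega) (by omega) ?_ ?_ ?_ hcardV
    · rw [hn]
      push_cast
      nlinarith
    · exact Nat.mul_pos (pow_pos hp.pos _) hSpos
    · have h1 : q ^ 3 * S * (q - 1) ≤ 2 * q ^ (n + 2) * (q - 1) := by
        rw [mul_assoc, hgeom]
        calc q ^ 3 * (q ^ n - 1) ≤ q ^ 3 * q ^ n := Nat.mul_le_mul_left _ (Nat.sub_le _ _)
          _ = q ^ (n + 2) * q := by ring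
          _ ≤ q ^ (n + 2) * (2 * (q - 1)) := Nat.mul_le_mul_left _ (by omega)
          _ = 2 * q ^ (n + 2) * (q - 1) := by ring
      exact Nat.le_of_mul_le_mul_right h1 (by omega)
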